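/- Let B be the coordinate ring of {x₁^{m₁}⋯xₙ^{mₙ} z = Q(x,y)} with Q monic in y of degree r ≥ 2 and all mᵢ ≥ 2. Then for every nonzero locally nilpotent ℂ-derivation ∂ of B, Ker(∂²) ⊆ ℂ[x₁,…,xₙ, y] (the image of the polynomial subring in x₁,…,xₙ,y in B). -/

import Mathlib

open MvPolynomial

set_option synthInstance.maxHeartbeats 1000000
set_option maxHeartbeats 1000000

set_option linter.unusedSectionVars false

namespace Danielewski

section Abstract
variable {G : Type*} [AddCommGroup G] [LinearOrder G] [IsOrderedAddMonoid G]

/-- All monomials of `t` are at most `s`. -/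
def Bd (t : AddMonoidAlgebra ℂ G) (s : G) : Prop := ∀ u, s < u → t.coeff u = 0

lemma Bd.mul {t t' : AddMonoidAlgebra ℂ G} {s s' : G} (h : Bd t s) (h' : Bd t' s') :
    Bd (t * t') (s + s') := by
  intro u hu
  rw [AddMonoidAlgebra.coeff_mul_apply_left]
  refine Finset.sum_eq_zero fun v hv => ?_
  have hv' : t.coeff v ≠ 0 := by simpa using hv
  have : v ≤ s := by
    by_contra hc
    exact hv' (h v (not_le.1 hc))
  have h2 : t'.coeff (-v + u) = 0 := by
    apply h'
    rw [lt_neg_add_iff_add_lt]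
    exact lt_of_le_of_lt (by gcongr) hu
  simp [h2]

lemma Bd.coeff_mul {t t' : AddMonoidAlgebra ℂ G} {s s' : G} (h : Bd t s) (h' : Bd t' s') :
    (t * t').coeff (s + s') = t.coeff s * t'.coeff s' := by
  rw [AddMonoidAlgebra.coeff_mul_apply_left]
  rw [Finsupp.sum, Finset.sum_eq_single s]
  · simp
  · intro v hv hvs
    have hv' : t.coeff v ≠ 0 := by simpa using hv
    have : v < s := by
      refine lt_of_le_of_ne ?_ hvs
      by_contra hc
      exact hv' (h v (not_le.1 hc))
    have h2 : t'.coeff (-v + (s + s')) = 0 := by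
      apply h'
      rw [lt_neg_add_iff_add_lt]
      gcongr
    simp [h2]
  · intro hs
    have : t.coeff s = 0 := by simpa using hs
    simp [this]

/-- Leading monomial `s`, leading coefficient one. -/
def Ld (t : AddMonoidAlgebra ℂ G) (s : G) : Prop := Bd t s ∧ t.coeff s = 1

lemma Ld.mul {t t' : AddMonoidAlgebra ℂ G} {s s' : G} (h : Ld t s) (h' : Ld t' s') :
    Ld (t * t') (s + s') :=
  ⟨h.1.mul h'.1, by rw [h.1.coeff_mul h'.1, h.2, h'.2, one_mul]⟩

lemma Ld.single (s : G) : Ld (AddMonoidAlgebra.single s (1 : ℂ)) s := by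
  refine ⟨fun u hu => ?_, by simp⟩
  simp [hu.ne]

lemma Ld.pow {t : AddMonoidAlgebra ℂ G} {s : G} (h : Ld t s) (k : ℕ) : Ld (t ^ k) (k • s) := by
  induction k with
  | zero => rw [pow_zero, zero_nsmul]; exact Ld.single (0 : G)
  | succ k ih => rw [pow_succ, succ_nsmul]; exact ih.mul h

lemma Ld.prod {ι : Type*} (F : Finset ι) (t : ι → AddMonoidAlgebra ℂ G) (s : ι → G)
    (h : ∀ i, Ld (t i) (s i)) : Ld (∏ i ∈ F, t i) (∑ i ∈ F, s i) := by
  classical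
  induction F using Finset.induction_on with
  | empty => exact Ld.single (0 : G)
  | insert i F hi ih => rw [Finset.prod_insert hi, Finset.sum_insert hi]; exact (h i).mul ih

/-- every nonzero element has a leading monomial -/
lemma exists_lead (t : AddMonoidAlgebra ℂ G) (ht : t ≠ 0) : ∃ s, Bd t s ∧ t.coeff s ≠ 0 := by
  have hne : t.coeff.support.Nonempty := by
    rw [Finsupp.support_nonempty_iff]
    simpa using ht
  refine ⟨t.coeff.support.max' hne, fun u hu => ?_, ?_⟩
  · by_contra hc
    exact absurd (Finset.le_max' _ u (by simpa using hc)) (not_le.2 hu)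
  · simpa using Finset.max'_mem _ hne

lemma Bd.unique {t : AddMonoidAlgebra ℂ G} {s s' : G} (h : Bd t s) (h0 : t.coeff s ≠ 0)
    (h' : Bd t s') (h0' : t.coeff s' ≠ 0) : s = s' := by
  rcases lt_trichotomy s s' with hh | hh | hh
  · exact absurd (h _ hh) h0'
  · exact hh
  · exact absurd (h' _ hh) h0

/-- The logarithmic derivation attached to `w`. -/
noncomputable def Del (w : G →+ AddMonoidAlgebra ℂ G) (t : AddMonoidAlgebra ℂ G) :
    AddMonoidAlgebra ℂ G :=
  Finsupp.linearCombination ℂ (fun v => AddMonoidAlgebra.single v (1 : ℂ) * w v) t.coeff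

lemma Del_add (w : G →+ AddMonoidAlgebra ℂ G) (t t' : AddMonoidAlgebra ℂ G) :
    Del w (t + t') = Del w t + Del w t' := by
  simp [Del]

lemma Del_zero (w : G →+ AddMonoidAlgebra ℂ G) : Del w 0 = 0 := by
  simp [Del]

lemma Del_single (w : G →+ AddMonoidAlgebra ℂ G) (v : G) (a : ℂ) :
    Del w (AddMonoidAlgebra.single v a) = AddMonoidAlgebra.single v a * w v := by
  simp only [Del, AddMonoidAlgebra.coeff_single, Finsupp.linearCombination_single]
  rw [← smul_mul_assoc, AddMonoidAlgebra.smul_single]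
  simp

lemma Del_mul (w : G →+ AddMonoidAlgebra ℂ G) (t t' : AddMonoidAlgebra ℂ G) :
    Del w (t * t') = t * Del w t' + t' * Del w t := by
  induction t using AddMonoidAlgebra.induction_linear with
  | zero => simp [Del_zero]
  | add f g hf hg => rw [add_mul, Del_add, hf, hg, Del_add]; ring
  | single v a =>
    induction t' using AddMonoidAlgebra.induction_linear with
    | zero => simp [Del_zero]
    | add f g hf hg => rw [mul_add, Del_add, hf, hg, Del_add]; ring
    | single v' a' =>
      rw [AddMonoidAlgebra.single_mul_single, Del_single, Del_single, Del_single, map_add,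
        ← AddMonoidAlgebra.single_mul_single]
      ring

lemma coeff_Del (w : G →+ AddMonoidAlgebra ℂ G) (t : AddMonoidAlgebra ℂ G) (u : G) :
    (Del w t).coeff u = t.coeff.sum fun v a => a * (w v).coeff (-v + u) := by
  rw [Del, Finsupp.linearCombination_apply, AddMonoidAlgebra.coeff_finsuppSum, Finsupp.sum_apply]
  simp [AddMonoidAlgebra.coeff_single_mul_apply]

lemma Bd.Del {w : G →+ AddMonoidAlgebra ℂ G} {e : G} (hw : ∀ s, Bd (w s) e)
    {t : AddMonoidAlgebra ℂ G} {s : G} (h : Bd t s) : Bd (Del w t) (s + e) := by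
  intro u hu
  rw [coeff_Del]
  refine Finset.sum_eq_zero fun v hv => ?_
  have hv' : t.coeff v ≠ 0 := by simpa using hv
  have : v ≤ s := by
    by_contra hc
    exact hv' (h v (not_le.1 hc))
  have h2 : (w v).coeff (-v + u) = 0 := by
    apply hw
    rw [lt_neg_add_iff_add_lt]
    exact lt_of_le_of_lt (by gcongr) hu
  simp [h2]

lemma Bd.coeff_Del {w : G →+ AddMonoidAlgebra ℂ G} {e : G} (hw : ∀ s, Bd (w s) e)
    {t : AddMonoidAlgebra ℂ G} {s : G} (h : Bd t s) :
    (Danielewski.Del w t).coeff (s + e) = t.coeff s * (w s).coeff e := by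
  rw [Danielewski.coeff_Del, Finsupp.sum, Finset.sum_eq_single s]
  · simp
  · intro v hv hvs
    have hv' : t.coeff v ≠ 0 := by simpa using hv
    have : v < s := by
      refine lt_of_le_of_ne ?_ hvs
      by_contra hc
      exact hv' (h v (not_le.1 hc))
    have h2 : (w v).coeff (-v + (s + e)) = 0 := by
      apply hw
      rw [lt_neg_add_iff_add_lt]
      gcongr
    simp [h2]
  · intro hs
    have : t.coeff s = 0 := by simpa using hs
    simp [this]

/-- iterates -/
lemma iter_Del {w : G →+ AddMonoidAlgebra ℂ G} {e : G} (hw : ∀ s, Bd (w s) e)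
    {t : AddMonoidAlgebra ℂ G} {s : G} (h : Bd t s) (k : ℕ) :
    Bd ((Del w)^[k] t) (s + k • e) ∧
    ((Del w)^[k] t).coeff (s + k • e) =
      t.coeff s * ∏ i ∈ Finset.range k, (w (s + i • e)).coeff e := by
  induction k with
  | zero => simpa using h
  | succ k ih =>
    rw [Function.iterate_succ_apply', succ_nsmul, ← add_assoc, Finset.prod_range_succ]
    exact ⟨ih.1.Del hw, by rw [ih.1.coeff_Del hw, ih.2, mul_assoc]⟩

end Abstract

section Comb

/-- The lex ordered exponent group; index `0` is the exponent of `y`. -/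
abbrev V (n : ℕ) : Type := Lex (Fin (n + 1) → ℤ)

/-- basis vectors -/
def bv {n : ℕ} (k : Fin (n + 1)) : V n := toLex (Pi.single k 1)

lemma V_expand {n : ℕ} (s : V n) : s = ∑ k, (s k) • bv k := by
  have : (ofLex s : Fin (n+1) → ℤ) = ∑ k, (s k) • (Pi.single k 1 : Fin (n + 1) → ℤ) := by
    ext i
    rw [Finset.sum_apply, Finset.sum_eq_single i]
    · simp
    · intro j _ hj
      simp [Pi.single_apply, hj.symm]
    · simp
  exact this

/-- the semigroup of leading exponents -/
def SS {n : ℕ} (r : ℕ) (m : Fin n → ℕ) (s : V n) : Prop :=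
  0 ≤ s 0 ∧ ∀ i : Fin n, -(m i : ℤ) * (s 0 / r) ≤ s i.succ

lemma V_add {n : ℕ} (s t : V n) (k) : (s + t) k = s k + t k := rfl

lemma V_nsmul {n : ℕ} (j : ℕ) (t : V n) (k) : (j • t) k = j * t k := by
  have : (j • t) k = j • (t k) := rfl
  rw [this, nsmul_eq_mul]

lemma bv_apply {n : ℕ} (k l : Fin (n + 1)) : (bv k : V n) l = if l = k then 1 else 0 := by
  have : (bv k : V n) l = (Pi.single k 1 : Fin (n + 1) → ℤ) l := rfl
  rw [this, Pi.single_apply]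

lemma SS_bv {n : ℕ} (r : ℕ) (m : Fin n → ℕ) (hr : 2 ≤ r) (k : Fin (n + 1)) :
    SS r m (bv k : V n) := by
  have h1 : (1 : ℤ) / (r : ℤ) = 0 := Int.ediv_eq_zero_of_lt (by norm_num) (by exact_mod_cast hr)
  constructor
  · rw [bv_apply]; split_ifs <;> norm_num
  · intro i
    have : ((bv k : V n) 0) / (r : ℤ) = 0 := by
      rw [bv_apply]; split_ifs
      · exact h1
      · simp
    rw [this, bv_apply]
    split_ifs <;> simp

lemma comb_int {n : ℕ} (r : ℕ) (hr : 2 ≤ r) (m : Fin n → ℕ) (hm : ∀ i, 2 ≤ m i)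
    (e : V n) (a : Fin n → ℕ) (b : ℕ)
    (M : V n → ℤ) (hM : ∀ s, M s = (∑ i : Fin n, a i * s i.succ) + b * s 0)
    (hnn : ∀ s, SS r m s → 0 ≤ M s)
    (hstep : ∀ s, SS r m s → 0 < M s → SS r m (s + e))
    (he : M e = -1) : (∀ i, a i = 0) ∧ b = 1 := by
  have Madd : ∀ s t, M (s + t) = M s + M t := by
    intro s t
    simp only [hM, V_add, mul_add, Finset.sum_add_distrib]; ring
  have hstepk : ∀ s, SS r m s → ∀ k : ℕ, (k : ℤ) ≤ M s →
      SS r m (s + k • e) ∧ M (s + k • e) = M s - k := by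
    intro s hs k
    induction k with
    | zero => intro _; simpa using hs
    | succ k ih =>
      intro hk
      push_cast at hk
      obtain ⟨h1, h2⟩ := ih (by linarith)
      rw [succ_nsmul, ← add_assoc]
      refine ⟨hstep _ h1 (by rw [h2]; linarith), ?_⟩
      rw [Madd, h2, he]; push_cast; ring
  have hMx : ∀ i : Fin n, M (bv i.succ) = a i := by
    intro i
    rw [hM]
    simp [bv_apply, (Fin.succ_ne_zero i).symm]
  have hMy : M (bv 0) = b := by
    rw [hM]
    simp [bv_apply]
  have hr0 : (0 : ℤ) < r := by exact_mod_cast (by omega : 0 < r)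
  have ha : ∀ i, a i = 0 := by
    intro i
    by_contra hai
    have hai' : (0 : ℤ) < a i := by exact_mod_cast Nat.pos_of_ne_zero hai
    -- z
    have hz : (0 : ℤ) ≤ r * b - ∑ j, (a j : ℤ) * m j := by
      let g : V n := toLex (Fin.cons (r : ℤ) (fun j => -(m j : ℤ)))
      have g0 : g 0 = r := rfl
      have gs : ∀ j : Fin n, g j.succ = -(m j : ℤ) := fun j => rfl
      have hg : SS r m g := by
        refine ⟨by rw [g0]; positivity, fun j => ?_⟩
        rw [g0, gs, Int.ediv_self hr0.ne']; simp
      have := hnn g hg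
      rw [hM] at this
      simp only [g0, gs, mul_neg, Finset.sum_neg_distrib] at this
      linarith
    have hb : 0 < (b : ℤ) := by
      have h1 : (a i : ℤ) * m i ≤ ∑ j, (a j : ℤ) * m j :=
        Finset.single_le_sum (f := fun j => (a j : ℤ) * m j)
          (fun j _ => by positivity) (Finset.mem_univ i)
      have h2 : (0 : ℤ) < a i * m i := by
        have : (0 : ℤ) < m i := by exact_mod_cast (by have := hm i; omega : 0 < m i)
        positivity
      have h3 : (0 : ℤ) < r * b := by linarith
      exact pos_of_mul_pos_right h3 hr0.le
    obtain ⟨hS, -⟩ := hstepk (bv i.succ) (SS_bv r m hr _) (a i) (by rw [hMx])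
    have hd : 0 ≤ e 0 := by
      have := hS.1
      rw [V_add, V_nsmul, bv_apply] at this
      simp only [(Fin.succ_ne_zero i).symm, if_false, zero_add] at this
      exact nonneg_of_mul_nonneg_right this hai'
    have hc : ∀ j, j ≠ i → 0 ≤ r * e j.succ + m j * e 0 := by
      intro j hj
      have := hS.2 j
      rw [V_add, V_nsmul, bv_apply, V_add, V_nsmul, bv_apply] at this
      simp only [(Fin.succ_ne_zero i).symm, if_false, zero_add, Fin.succ_inj, hj] at this
      have h1 : (r : ℤ) * ((a i * e 0) / r) ≤ a i * e 0 := Int.mul_ediv_self_le hr0.ne'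
      have h2 : (0 : ℤ) ≤ a i * (r * e j.succ + m j * e 0) := by
        have hmj : (0 : ℤ) ≤ m j := by positivity
        nlinarith
      exact nonneg_of_mul_nonneg_right h2 hai'
    have hci : r * e i.succ + m i * e 0 < 0 := by
      by_contra hcon
      have hall : ∀ j, 0 ≤ r * e j.succ + m j * e 0 := by
        intro j
        by_cases hj : j = i
        · subst hj; exact not_lt.1 hcon
        · exact hc j hj
      have h1 : 0 ≤ ∑ j, (a j : ℤ) * (r * e j.succ + m j * e 0) :=
        Finset.sum_nonneg fun j _ => mul_nonneg (by positivity) (hall j)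
      have h2 : ∑ j, (a j : ℤ) * (r * e j.succ + m j * e 0)
          = r * ∑ j, (a j : ℤ) * e j.succ + (∑ j, (a j : ℤ) * m j) * e 0 := by
        rw [Finset.mul_sum, Finset.sum_mul, ← Finset.sum_add_distrib]
        exact Finset.sum_congr rfl fun j _ => by ring
      rw [hM] at he
      have h3 : 0 ≤ (r * b - ∑ j, (a j : ℤ) * m j) * e 0 := mul_nonneg hz hd
      nlinarith
    have hx := (hstep (bv i.succ) (SS_bv r m hr _) (by rw [hMx]; exact hai')).2 i
    have hy := (hstep (bv 0) (SS_bv r m hr _) (by rw [hMy]; exact hb)).2 i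
    rw [V_add, V_add, bv_apply, bv_apply] at hx hy
    simp only [(Fin.succ_ne_zero i).symm, Fin.succ_ne_zero i, if_false, zero_add, if_true] at hx hy
    have hmi : (2 : ℤ) ≤ m i := by exact_mod_cast hm i
    have hr2 : (2 : ℤ) ≤ r := by exact_mod_cast hr
    set q := e 0 / (r : ℤ) with hq
    have hq1 : r * q ≤ e 0 := Int.mul_ediv_self_le hr0.ne'
    have hq2 : e 0 < r * q + r := Int.lt_mul_ediv_self_add hr0
    by_cases hlt : 1 + e 0 < r * q + r
    · have : (1 + e 0) / (r : ℤ) = q := by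
        rw [Int.ediv_eq_iff_of_pos hr0]
        constructor <;> nlinarith
      rw [this] at hy
      nlinarith
    · have h0 : e 0 = r * q + r - 1 := by omega
      have h1 : r * (-(m i : ℤ) * q) ≤ r * (1 + e i.succ) := by gcongr
      rw [h0] at hci
      nlinarith
  refine ⟨ha, ?_⟩
  rw [hM] at he
  simp only [ha, Nat.cast_zero, zero_mul, Finset.sum_const_zero, zero_add] at he
  have : (b : ℤ) * (- e 0) = 1 := by linarith
  have := Int.eq_one_or_neg_one_of_mul_eq_one this
  omega

lemma comb {n : ℕ} (r : ℕ) (hr : 2 ≤ r) (m : Fin n → ℕ) (hm : ∀ i, 2 ≤ m i)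
    (e : V n) (l : V n →+ ℂ) (hl : l ≠ 0)
    (h1 : ∀ s, SS r m s → ∃ k : ℕ, l s + k * l e = 0)
    (h2 : ∀ s, SS r m s → l s ≠ 0 → SS r m (s + e)) :
    l e ≠ 0 ∧ ∀ s, l s = - (s 0 : ℂ) * l e := by
  have hexp : ∀ s : V n, l s = ∑ k, (s k : ℂ) * l (bv k) := by
    intro s
    conv_lhs => rw [V_expand s]
    rw [map_sum]
    refine Finset.sum_congr rfl fun k _ => ?_
    rw [map_zsmul, zsmul_eq_mul]
  have he : l e ≠ 0 := by
    intro he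
    apply hl
    ext s
    rw [hexp]
    refine Finset.sum_eq_zero fun k _ => ?_
    obtain ⟨j, hj⟩ := h1 (bv k) (SS_bv r m hr k)
    rw [he] at hj
    have : l (bv k) = 0 := by simpa using hj
    simp [this]
  choose a ha using fun k : Fin (n + 1) => h1 (bv k) (SS_bv r m hr k)
  let M : V n → ℤ := fun s => (∑ i : Fin n, a i.succ * s i.succ) + a 0 * s 0
  have hlM : ∀ s, l s = - (M s : ℂ) * l e := by
    intro s
    rw [hexp, Fin.sum_univ_succ]
    have : ∀ k, l (bv k) = - (a k : ℂ) * l e := fun k => by linear_combination ha k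
    have hMc : (M s : ℂ) = (∑ i : Fin n, (a i.succ : ℂ) * (s i.succ : ℂ)) + a 0 * (s 0 : ℂ) := by
      simp only [M]; push_cast; rfl
    have e1 : ∑ i : Fin n, (s i.succ : ℂ) * l (bv i.succ)
        = - (∑ i : Fin n, (a i.succ : ℂ) * (s i.succ : ℂ)) * l e := by
      rw [← Finset.sum_neg_distrib, Finset.sum_mul]
      refine Finset.sum_congr rfl fun j _ => ?_
      rw [this]; ring
    rw [hMc, e1, this]; ring
  have hM0 : ∀ s, M s = 0 → l s = 0 := fun s h => by rw [hlM, h]; simp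
  obtain ⟨hA, hB⟩ := comb_int r hr m hm e (fun i => a i.succ) (a 0) M (fun s => rfl)
    (by
      intro s hs
      obtain ⟨k, hk⟩ := h1 s hs
      rw [hlM] at hk
      have : ((k : ℂ) - M s) * l e = 0 := by linear_combination hk
      rcases mul_eq_zero.1 this with h | h
      · have h' : (k : ℂ) = M s := by linear_combination h
        have : (k : ℤ) = M s := by exact_mod_cast h'
        omega
      · exact absurd h he)
    (by
      intro s hs hp
      apply h2 s hs
      rw [hlM]
      have : (M s : ℂ) ≠ 0 := by exact_mod_cast hp.ne'
      exact mul_ne_zero (neg_ne_zero.2 this) he)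
    (by
      have := hlM e
      have h : ((M e : ℂ) + 1) * l e = 0 := by linear_combination this
      rcases mul_eq_zero.1 h with h | h
      · have : M e + 1 = 0 := by exact_mod_cast h
        omega
      · exact absurd h he)
  refine ⟨he, fun s => ?_⟩
  rw [hlM]
  have : M s = s 0 := by
    have hA' : ∀ i : Fin n, a i.succ = 0 := hA
    have : M s = (∑ i : Fin n, (a i.succ : ℤ) * s i.succ) + a 0 * s 0 := rfl
    rw [this, hB, Finset.sum_eq_zero (fun i _ => by rw [hA']; simp)]
    simp
  rw [this]

end Comb
end Danielewski

namespace Danielewski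

section Ring

lemma V_le_zero {n : ℕ} {s t : V n} (h : s ≤ t) : s 0 ≤ t 0 :=
  Pi.apply_le_of_toLex (x := ofLex s) (y := ofLex t) (i := 0) h
    (fun j hj => absurd hj (Fin.not_lt_zero j))

/-- image of `x i` -/
noncomputable def xT {n : ℕ} (i : Fin n) : AddMonoidAlgebra ℂ (V n) :=
  AddMonoidAlgebra.single (bv i.succ) 1

/-- image of `y` -/
noncomputable def yT {n : ℕ} : AddMonoidAlgebra ℂ (V n) := AddMonoidAlgebra.single (bv 0) 1

/-- image of `Q` -/
noncomputable def qT {n : ℕ} (Q : Polynomial (MvPolynomial (Fin n) ℂ)) :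
    AddMonoidAlgebra ℂ (V n) :=
  Polynomial.eval₂ (MvPolynomial.aeval (R := ℂ) (xT (n := n))).toRingHom yT Q

/-- exponent of the inverse of `x^m` -/
def mv {n : ℕ} (m : Fin n → ℕ) : V n := - ∑ i, m i • bv i.succ

/-- inverse of the image of `x^m` -/
noncomputable def mT {n : ℕ} (m : Fin n → ℕ) : AddMonoidAlgebra ℂ (V n) :=
  AddMonoidAlgebra.single (mv m) 1

lemma V_neg {n : ℕ} (t : V n) (k) : (-t) k = - t k := rfl

lemma V_sum {n : ℕ} {ι : Type*} (F : Finset ι) (f : ι → V n) (k) :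
    (∑ i ∈ F, f i) k = ∑ i ∈ F, f i k := by
  have : (∑ i ∈ F, (ofLex (f i))) k = ∑ i ∈ F, (ofLex (f i)) k := Finset.sum_apply _ _ _
  exact this

lemma xsum_zero {n : ℕ} (m : Fin n → ℕ) : (∑ i, m i • (bv i.succ : V n)) 0 = 0 := by
  rw [V_sum]
  refine Finset.sum_eq_zero fun i _ => ?_
  rw [V_nsmul, bv_apply, if_neg (Fin.succ_ne_zero i).symm, mul_zero]

lemma xsum_succ {n : ℕ} (m : Fin n → ℕ) (j : Fin n) :
    (∑ i, m i • (bv i.succ : V n)) j.succ = m j := by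
  rw [V_sum, Finset.sum_eq_single j]
  · rw [V_nsmul, bv_apply, if_pos rfl, mul_one]
  · intro i _ hi
    rw [V_nsmul, bv_apply, if_neg (fun h => hi (Fin.succ_injective _ h).symm), mul_zero]
  · intro h; exact absurd (Finset.mem_univ j) h

lemma xprod_T {n : ℕ} (m : Fin n → ℕ) :
    ∏ i, (xT i : AddMonoidAlgebra ℂ (V n)) ^ m i
      = AddMonoidAlgebra.single (∑ i, m i • (bv i.succ : V n)) 1 := by
  have : ∀ i : Fin n, (xT i : AddMonoidAlgebra ℂ (V n)) ^ m i
      = AddMonoidAlgebra.single (m i • bv i.succ) 1 := by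
    intro i
    rw [xT, AddMonoidAlgebra.single_pow, one_pow]
  rw [Finset.prod_congr rfl (fun i _ => this i), AddMonoidAlgebra.prod_single]
  simp

lemma xprod_mul_mT {n : ℕ} (m : Fin n → ℕ) :
    (∏ i, (xT i : AddMonoidAlgebra ℂ (V n)) ^ m i) * mT m = 1 := by
  rw [xprod_T, mT, AddMonoidAlgebra.single_mul_single, mv, add_neg_cancel, one_mul]
  rfl

lemma psi_supp {n : ℕ} (q : MvPolynomial (Fin n) ℂ) :
    ∀ u : V n, (MvPolynomial.aeval (R := ℂ) (xT (n := n)) q).coeff u ≠ 0 → u 0 = 0 := by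
  induction q using MvPolynomial.induction_on with
  | C a =>
    intro u hu
    rw [MvPolynomial.aeval_C, AddMonoidAlgebra.coe_algebraMap] at hu
    simp only [Function.comp, AddMonoidAlgebra.coeff_single, Finsupp.single_apply] at hu
    by_cases h : (0 : V n) = u
    · rw [← h]; rfl
    · rw [if_neg h] at hu; exact absurd rfl hu
  | add p q hp hq =>
    intro u hu
    rw [map_add, AddMonoidAlgebra.coeff_add, Finsupp.add_apply] at hu
    by_cases h : (MvPolynomial.aeval (R := ℂ) (xT (n := n)) p).coeff u = 0
    · rw [h, zero_add] at hu; exact hq u hu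
    · exact hp u h
  | mul_X p i hp =>
    intro u hu
    rw [map_mul, MvPolynomial.aeval_X, xT, AddMonoidAlgebra.coeff_mul_single_apply, mul_one] at hu
    have := hp _ hu
    rw [V_add, V_neg, bv_apply, if_neg (Fin.succ_ne_zero i).symm] at this
    simpa using this

lemma Ld_qT {n : ℕ} (Q : Polynomial (MvPolynomial (Fin n) ℂ)) (hQ : Q.Monic) :
    Ld (qT Q) (Q.natDegree • (bv 0 : V n)) := by
  have hlow : ∀ k < Q.natDegree, ∀ u : V n, Q.natDegree • (bv 0 : V n) ≤ u →
      ((MvPolynomial.aeval (R := ℂ) (xT (n := n)) (Q.coeff k)) * yT ^ k).coeff u = 0 := by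
    intro k hk u hu
    rw [yT, AddMonoidAlgebra.single_pow, one_pow, AddMonoidAlgebra.coeff_mul_single_apply, mul_one]
    by_contra hc
    have h1 := psi_supp _ _ hc
    rw [V_add, V_neg, V_nsmul, bv_apply, if_pos rfl] at h1
    have h2 := V_le_zero hu
    rw [V_nsmul, bv_apply, if_pos rfl] at h2
    omega
  have hq : qT Q = (∑ k ∈ Finset.range Q.natDegree,
      (MvPolynomial.aeval (R := ℂ) (xT (n := n)) (Q.coeff k)) * yT ^ k) + yT ^ Q.natDegree := by
    rw [qT, Polynomial.eval₂_eq_sum_range, Finset.sum_range_succ, Polynomial.Monic.coeff_natDegree hQ]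
    simp
  have hy : Ld (yT ^ Q.natDegree) (Q.natDegree • (bv 0 : V n)) := (Ld.single _).pow _
  have hs : ∀ u : V n, Q.natDegree • (bv 0 : V n) ≤ u →
      (qT Q).coeff u = (yT ^ Q.natDegree : AddMonoidAlgebra ℂ (V n)).coeff u := by
    intro u hu
    rw [hq, AddMonoidAlgebra.coeff_add, Finsupp.add_apply, AddMonoidAlgebra.coeff_sum,
      Finsupp.finsetSum_apply, Finset.sum_eq_zero, zero_add]
    intro k hk
    exact hlow k (Finset.mem_range.1 hk) u hu
  exact ⟨fun u hu => by rw [hs u hu.le]; exact hy.1 u hu, by rw [hs _ le_rfl]; exact hy.2⟩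

/-- The abstract setup. -/
structure Setup (n r : ℕ) (m : Fin n → ℕ) (Q : Polynomial (MvPolynomial (Fin n) ℂ))
    (B : Type) [CommRing B] [Algebra ℂ B] (x : Fin n → B) (y z : B)
    (F : B →ₐ[ℂ] AddMonoidAlgebra ℂ (V n)) : Prop where
  hr : 2 ≤ r
  hm : ∀ i, 2 ≤ m i
  hQ : Q.Monic
  hdeg : Q.natDegree = r
  hFx : ∀ i, F (x i) = xT i
  hFy : F y = yT
  hFz : F z = mT m * qT Q
  hrel : (∏ i, x i ^ m i) * z = Polynomial.eval₂ (MvPolynomial.aeval (R := ℂ) x).toRingHom y Q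
  hgen : Algebra.adjoin ℂ (Set.range x ∪ {y, z}) = ⊤

/-- index set of normal monomials -/
abbrev NN (n r : ℕ) : Type := (Fin n → ℕ) × Fin r × ℕ

/-- leading exponent -/
def idx {n r : ℕ} (m : Fin n → ℕ) (v : NN n r) : V n :=
  (∑ i, v.1 i • bv i.succ) + (v.2.1 : ℕ) • bv 0 + v.2.2 • (mv m + r • bv 0)

lemma idx_zero {n r : ℕ} (m : Fin n → ℕ) (v : NN n r) :
    (idx m v) 0 = (v.2.1 : ℕ) + r * v.2.2 := by
  rw [idx, V_add, V_add, xsum_zero, V_nsmul, V_nsmul, V_add, V_nsmul, mv, V_neg, xsum_zero,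
    bv_apply, if_pos rfl]
  ring

lemma idx_succ {n r : ℕ} (m : Fin n → ℕ) (v : NN n r) (i : Fin n) :
    (idx m v) i.succ = v.1 i - m i * v.2.2 := by
  rw [idx, V_add, V_add, xsum_succ, V_nsmul, V_nsmul, V_add, V_nsmul, mv, V_neg, xsum_succ,
    bv_apply, if_neg (Fin.succ_ne_zero i)]
  ring

lemma idx_div {n r : ℕ} (m : Fin n → ℕ) (v : NN n r) : (idx m v) 0 / (r : ℤ) = v.2.2 := by
  have hlt : ((v.2.1 : ℕ) : ℤ) < r := by exact_mod_cast v.2.1.2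
  have h0 : (0 : ℤ) ≤ ((v.2.1 : ℕ) : ℤ) := by positivity
  rw [idx_zero, Int.add_mul_ediv_left _ _ (by omega), Int.ediv_eq_zero_of_lt h0 hlt, zero_add]

lemma idx_inj {n r : ℕ} (m : Fin n → ℕ) : Function.Injective (idx m : NN n r → V n) := by
  rintro v v' h
  have h3 : (v.2.2 : ℤ) = v'.2.2 := by rw [← idx_div m v, ← idx_div m v', h]
  have h3' : v.2.2 = v'.2.2 := by exact_mod_cast h3
  have h2 : (((v.2.1 : ℕ) : ℤ)) + r * v.2.2 = (v'.2.1 : ℕ) + r * v'.2.2 := by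
    rw [← idx_zero m v, ← idx_zero m v', h]
  have h2' : (v.2.1 : ℕ) = (v'.2.1 : ℕ) := by rw [h3'] at h2; omega
  refine Prod.ext ?_ (Prod.ext (Fin.ext h2') h3')
  funext i
  have h1 : (v.1 i : ℤ) - m i * v.2.2 = v'.1 i - m i * v'.2.2 := by
    rw [← idx_succ m v, ← idx_succ m v', h]
  rw [h3'] at h1
  omega

lemma idx_SS {n r : ℕ} (m : Fin n → ℕ) (v : NN n r) : SS r m (idx m v) := by
  refine ⟨by rw [idx_zero]; positivity, fun i => ?_⟩
  rw [idx_div, idx_succ]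
  have : (0 : ℤ) ≤ v.1 i := by positivity
  linarith

lemma SS_idx {n r : ℕ} (hr : 2 ≤ r) (m : Fin n → ℕ) (s : V n) (hs : SS r m s) :
    ∃ v : NN n r, idx m v = s := by
  have hr0 : (0 : ℤ) < r := by exact_mod_cast (by omega : 0 < r)
  have hq : 0 ≤ s 0 / (r : ℤ) := Int.ediv_nonneg hs.1 hr0.le
  have hmd := Int.emod_nonneg (s 0) hr0.ne'
  have hml := Int.emod_lt_of_pos (s 0) hr0
  have hadd := Int.emod_add_mul_ediv (s 0) r
  refine ⟨(fun i => (s i.succ + m i * (s 0 / (r : ℤ))).toNat,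
    ⟨(s 0 % (r : ℤ)).toNat, by omega⟩, (s 0 / (r : ℤ)).toNat), ?_⟩
  have : ∀ k, (idx m ((fun i => (s i.succ + m i * (s 0 / (r : ℤ))).toNat,
    ⟨(s 0 % (r : ℤ)).toNat, by omega⟩, (s 0 / (r : ℤ)).toNat) : NN n r)) k = s k := by
    intro k
    refine Fin.cases ?_ (fun i => ?_) k
    · rw [idx_zero]
      simp only [Int.toNat_of_nonneg hmd, Int.toNat_of_nonneg hq]
      exact hadd
    · rw [idx_succ]
      have := hs.2 i
      simp only [Int.toNat_of_nonneg hq]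
      rw [Int.toNat_of_nonneg (by linarith)]
      ring
  exact funext this

/-- normal monomials -/
def nm {n r : ℕ} {B : Type} [CommRing B] (x : Fin n → B) (y z : B) (v : NN n r) : B :=
  (∏ i, x i ^ v.1 i) * y ^ (v.2.1 : ℕ) * z ^ v.2.2

variable {n r : ℕ} {m : Fin n → ℕ} {Q : Polynomial (MvPolynomial (Fin n) ℂ)}
    {B : Type} [CommRing B] [Algebra ℂ B] {x : Fin n → B} {y z : B}
    {F : B →ₐ[ℂ] AddMonoidAlgebra ℂ (V n)}

lemma Setup.Ld_nm (H : Setup n r m Q B x y z F) (v : NN n r) : Ld (F (nm x y z v)) (idx m v) := by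
  rw [nm, map_mul, map_mul, map_prod, map_pow, map_pow, H.hFy, H.hFz]
  refine Ld.mul (Ld.mul ?_ ((Ld.single _).pow _)) (Ld.pow ?_ _)
  · refine Ld.prod _ _ _ fun i => ?_
    rw [map_pow, H.hFx]
    exact (Ld.single _).pow _
  · have := Ld_qT Q H.hQ
    rw [H.hdeg] at this
    exact (Ld.single _).mul this

lemma Setup.span (H : Setup n r m Q B x y z F) :
    Submodule.span ℂ (Set.range (nm x y z : NN n r → B)) = ⊤ := by
  classical
  set S := Submodule.span ℂ (Set.range (nm x y z : NN n r → B)) with hS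
  have hgenS : ∀ v : NN n r, nm x y z v ∈ S := fun v => Submodule.subset_span ⟨v, rfl⟩
  have key : ∀ p : B, (∀ v : NN n r, p * nm x y z v ∈ S) → ∀ s ∈ S, p * s ∈ S := by
    intro p hp s hs
    induction hs using Submodule.span_induction with
    | mem s h => obtain ⟨v, rfl⟩ := h; exact hp v
    | zero => rw [mul_zero]; exact S.zero_mem
    | add a b _ _ ha hb => rw [mul_add]; exact S.add_mem ha hb
    | smul c a _ ha => rw [mul_smul_comm]; exact S.smul_mem c ha
  have hx : ∀ i, ∀ s ∈ S, x i * s ∈ S := by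
    intro i
    apply key
    intro v
    have : x i * nm x y z v = nm x y z (v.1 + Pi.single i 1, v.2) := by
      simp only [nm, Pi.add_apply, pow_add, Finset.prod_mul_distrib]
      rw [Finset.prod_eq_single i (f := fun j => x j ^ (Pi.single i 1 : Fin n → ℕ) j)]
      · simp; ring
      · intro j _ hj; simp [Pi.single_apply, hj]
      · intro h; exact absurd (Finset.mem_univ i) h
    rw [this]; exact hgenS _
  have hz : ∀ s ∈ S, z * s ∈ S := by
    apply key
    intro v
    have : z * nm x y z v = nm x y z (v.1, v.2.1, v.2.2 + 1) := by
      simp only [nm, pow_succ]; ring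
    rw [this]; exact hgenS _
  have hq : ∀ q : MvPolynomial (Fin n) ℂ, ∀ s ∈ S, MvPolynomial.aeval (R := ℂ) x q * s ∈ S := by
    intro q
    induction q using MvPolynomial.induction_on with
    | C a => intro s hs; rw [MvPolynomial.aeval_C, ← Algebra.smul_def]; exact S.smul_mem _ hs
    | add p q hp hq => intro s hs; rw [map_add, add_mul]; exact S.add_mem (hp s hs) (hq s hs)
    | mul_X p i hp =>
      intro s hs
      rw [map_mul, MvPolynomial.aeval_X, mul_assoc]
      exact hp _ (hx i s hs)
  have hr0 : 0 < r := by have := H.hr; omega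
  have hy : ∀ s ∈ S, y * s ∈ S := by
    apply key
    rintro ⟨α, ⟨β, hβ⟩, γ⟩
    by_cases h : β + 1 < r
    · have : y * nm x y z ((α, ⟨β, hβ⟩, γ) : NN n r) = nm x y z ((α, ⟨β + 1, h⟩, γ) : NN n r) := by
        simp only [nm, pow_succ]; ring
      rw [this]; exact hgenS _
    · have hβ' : r = β + 1 := by omega
      have hrel := H.hrel
      rw [Polynomial.eval₂_eq_sum_range, H.hdeg, Finset.sum_range_succ, ← H.hdeg,
        Polynomial.Monic.coeff_natDegree H.hQ, H.hdeg, map_one, one_mul] at hrel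
      have e1 : y * nm x y z ((α, ⟨β, hβ⟩, γ) : NN n r)
          = MvPolynomial.aeval (R := ℂ) x (∏ i, MvPolynomial.X i ^ m i) *
              (z * nm x y z ((α, ⟨0, hr0⟩, γ) : NN n r))
            - ∑ k : Fin r, MvPolynomial.aeval (R := ℂ) x (Q.coeff k) *
                nm x y z ((α, k, γ) : NN n r) := by
        have e2 : y * nm x y z ((α, ⟨β, hβ⟩, γ) : NN n r)
            = y ^ r * ((∏ i, x i ^ α i) * z ^ γ) := by
          have : y ^ r = y ^ β * y := by rw [← pow_succ]; congr 1
          rw [this]; simp only [nm]; ring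
        have e3 : ∑ k : Fin r, MvPolynomial.aeval (R := ℂ) x (Q.coeff k) *
                nm x y z ((α, k, γ) : NN n r)
            = (∑ k ∈ Finset.range r, (MvPolynomial.aeval (R := ℂ) x).toRingHom (Q.coeff k) * y ^ k)
              * ((∏ i, x i ^ α i) * z ^ γ) := by
          rw [← Fin.sum_univ_eq_sum_range
            (fun k => (MvPolynomial.aeval (R := ℂ) x).toRingHom (Q.coeff k) * y ^ k),
            Finset.sum_mul]
          refine Finset.sum_congr rfl fun k _ => ?_
          simp only [nm]
          change MvPolynomial.aeval (R := ℂ) x (Q.coeff k) * _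
            = MvPolynomial.aeval (R := ℂ) x (Q.coeff k) * _ * _
          ring
        rw [e2, e3, map_prod]
        simp only [map_pow, MvPolynomial.aeval_X, nm, pow_zero]
        linear_combination (- (∏ i, x i ^ α i) * z ^ γ) * hrel
      rw [e1]
      exact S.sub_mem (hq _ _ (hz _ (hgenS _))) (S.sum_mem fun k _ => hq _ _ (hgenS _))
  have h1 : (1 : B) ∈ S := by
    have : (1 : B) = nm x y z ((0, ⟨0, hr0⟩, 0) : NN n r) := by simp [nm]
    rw [this]; exact hgenS _
  have hall : ∀ p : B, ∀ s ∈ S, p * s ∈ S := by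
    intro p
    have hp : p ∈ Algebra.adjoin ℂ (Set.range x ∪ {y, z}) := by rw [H.hgen]; trivial
    induction hp using Algebra.adjoin_induction with
    | mem p h =>
      rcases h with ⟨i, rfl⟩ | h
      · exact hx i
      · rcases h with rfl | h
        · exact hy
        · rw [Set.mem_singleton_iff.1 h]; exact hz
    | algebraMap c => intro s hs; rw [← Algebra.smul_def]; exact S.smul_mem _ hs
    | add p q _ _ hp hq => intro s hs; rw [add_mul]; exact S.add_mem (hp s hs) (hq s hs)
    | mul p q _ _ hp hq => intro s hs; rw [mul_assoc]; exact hp _ (hq s hs)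
  rw [eq_top_iff]
  intro p _
  simpa using hall p 1 h1

lemma Setup.lead (H : Setup n r m Q B x y z F) (b : B) (hb : b ≠ 0) :
    ∃ (c : NN n r →₀ ℂ) (v : NN n r), (c.sum fun i a => a • nm x y z i) = b ∧
      (∀ v' ∈ c.support, idx m v' ≤ idx m v) ∧ Bd (F b) (idx m v) ∧ (F b).coeff (idx m v) ≠ 0 := by
  have hmem : b ∈ Submodule.span ℂ (Set.range (nm x y z : NN n r → B)) := by
    rw [H.span]; trivial
  obtain ⟨c, hc⟩ := Finsupp.mem_span_range_iff_exists_finsupp.1 hmem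
  have hne : c.support.Nonempty := by
    rw [Finsupp.support_nonempty_iff]
    rintro rfl
    exact hb (by rw [← hc]; simp)
  obtain ⟨v, hv, hmax⟩ := Finset.exists_max_image c.support (idx m) hne
  have hF : ∀ u, (F b).coeff u = ∑ i ∈ c.support, c i * (F (nm x y z i)).coeff u := by
    intro u
    rw [← hc, Finsupp.sum, map_sum, AddMonoidAlgebra.coeff_sum, Finsupp.finsetSum_apply]
    refine Finset.sum_congr rfl fun i _ => ?_
    rw [map_smul, AddMonoidAlgebra.coeff_smul_apply, smul_eq_mul]
  refine ⟨c, v, hc, hmax, ?_, ?_⟩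
  · intro u hu
    rw [hF]
    refine Finset.sum_eq_zero fun i hi => ?_
    rw [(H.Ld_nm i).1 u (lt_of_le_of_lt (hmax i hi) hu), mul_zero]
  · rw [hF, Finset.sum_eq_single v]
    · rw [(H.Ld_nm v).2, mul_one]; simpa using hv
    · intro i hi hiv
      rw [(H.Ld_nm i).1 _ (lt_of_le_of_ne (hmax i hi) (fun h => hiv (idx_inj m h))), mul_zero]
    · intro h; exact absurd hv h

lemma Setup.inj (H : Setup n r m Q B x y z F) (b : B) (hb : F b = 0) : b = 0 := by
  by_contra hne
  obtain ⟨c, v, -, -, -, h⟩ := H.lead b hne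
  rw [hb] at h
  simp at h

/-- the log derivation data of a derivation of `B` -/
noncomputable def om (x : Fin n → B) (y : B) (F : B →ₐ[ℂ] AddMonoidAlgebra ℂ (V n))
    (D : Derivation ℂ B B) (k : Fin (n + 1)) : AddMonoidAlgebra ℂ (V n) :=
  AddMonoidAlgebra.single (-bv k) 1 * F (D ((Fin.cons y x : Fin (n + 1) → B) k))

/-- the log derivation data of a derivation of `B` -/
noncomputable def ww (x : Fin n → B) (y : B) (F : B →ₐ[ℂ] AddMonoidAlgebra ℂ (V n))
    (D : Derivation ℂ B B) : V n →+ AddMonoidAlgebra ℂ (V n) :=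
  AddMonoidHom.mk' (fun s => ∑ k, (s k) • om x y F D k) (by
    intro s t
    rw [← Finset.sum_add_distrib]
    refine Finset.sum_congr rfl fun k _ => ?_
    rw [V_add, add_smul])

lemma ww_apply (D : Derivation ℂ B B) (s : V n) :
    ww x y F D s = ∑ k, (s k) • om x y F D k := rfl

lemma ww_bv (D : Derivation ℂ B B) (k : Fin (n + 1)) : ww x y F D (bv k) = om x y F D k := by
  rw [ww_apply, Finset.sum_eq_single k]
  · rw [bv_apply, if_pos rfl, one_smul]
  · intro l _ hl
    rw [bv_apply, if_neg hl, zero_smul]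
  · intro h; exact absurd (Finset.mem_univ k) h

lemma Del_bv (D : Derivation ℂ B B) (k : Fin (n + 1)) :
    Del (ww x y F D) (AddMonoidAlgebra.single (bv k) 1)
      = F (D ((Fin.cons y x : Fin (n + 1) → B) k)) := by
  rw [Del_single, ww_bv, om, ← mul_assoc, AddMonoidAlgebra.single_mul_single, add_neg_cancel,
    one_mul]
  exact one_mul _

lemma Setup.F_D (H : Setup n r m Q B x y z F) (D : Derivation ℂ B B) (b : B) :
    F (D b) = Del (ww x y F D) (F b) := by
  let K : Subalgebra ℂ B :=
    { carrier := {b | F (D b) = Del (ww x y F D) (F b)}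
      mul_mem' := by
        intro a b ha hb
        simp only [Set.mem_ofPred_eq] at ha hb ⊢
        rw [D.leibniz, map_add, map_mul, Del_mul, smul_eq_mul, smul_eq_mul, map_mul, map_mul,
          ha, hb]
      add_mem' := by
        intro a b ha hb
        simp only [Set.mem_ofPred_eq] at ha hb ⊢
        rw [map_add, map_add, map_add, Del_add, ha, hb]
      algebraMap_mem' := by
        intro c
        simp only [Set.mem_ofPred_eq]
        rw [D.map_algebraMap, map_zero, AlgHom.commutes, AddMonoidAlgebra.coe_algebraMap]
        simp only [Function.comp]
        rw [Del_single, map_zero, mul_zero] }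
  have hK : ∀ b, b ∈ K ↔ F (D b) = Del (ww x y F D) (F b) := fun b => Iff.rfl
  have hx : ∀ i, x i ∈ K := by
    intro i
    rw [hK, H.hFx, xT, Del_bv, Fin.cons_succ]
  have hy : y ∈ K := by
    rw [hK, H.hFy, yT, Del_bv, Fin.cons_zero]
  have hq : ∀ q, MvPolynomial.aeval (R := ℂ) x q ∈ K := by
    intro q
    induction q using MvPolynomial.induction_on with
    | C a => rw [MvPolynomial.aeval_C]; exact K.algebraMap_mem a
    | add p q hp hq => rw [map_add]; exact K.add_mem hp hq
    | mul_X p i hp => rw [map_mul, MvPolynomial.aeval_X]; exact K.mul_mem hp (hx i)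
  have hQ : (∏ i, x i ^ m i) * z ∈ K := by
    rw [H.hrel, Polynomial.eval₂_eq_sum_range]
    exact K.sum_mem fun k _ => K.mul_mem (hq _) (K.pow_mem hy k)
  have hxm : (∏ i, x i ^ m i) ∈ K := K.prod_mem fun i _ => K.pow_mem (hx i) _
  have hz : z ∈ K := by
    rw [hK] at hQ hxm ⊢
    rw [D.leibniz, map_add, map_mul, Del_mul, smul_eq_mul, smul_eq_mul, map_mul, map_mul,
      hxm] at hQ
    have h1 : F (∏ i, x i ^ m i) * mT m = 1 := by
      rw [map_prod, ← xprod_mul_mT m]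
      congr 1
      exact Finset.prod_congr rfl fun i _ => by rw [map_pow, H.hFx]
    have h2 := add_right_cancel hQ
    calc F (D z) = (F (∏ i, x i ^ m i) * mT m) * F (D z) := by rw [h1, one_mul]
      _ = mT m * (F (∏ i, x i ^ m i) * F (D z)) := by ring
      _ = (F (∏ i, x i ^ m i) * mT m) * Del (ww x y F D) (F z) := by rw [h2]; ring
      _ = _ := by rw [h1, one_mul]
  have htop : K = ⊤ := by
    rw [eq_top_iff, ← H.hgen]
    refine Algebra.adjoin_le ?_
    rintro p (⟨i, rfl⟩ | h)
    · exact hx i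
    · rcases h with rfl | h
      · exact hy
      · rw [Set.mem_singleton_iff.1 h]; exact hz
  exact (hK b).1 (by rw [htop]; trivial)

lemma Setup.F_iter (H : Setup n r m Q B x y z F) (D : Derivation ℂ B B) (k : ℕ) (b : B) :
    F ((⇑D)^[k] b) = (Del (ww x y F D))^[k] (F b) := by
  induction k with
  | zero => rfl
  | succ k ih => rw [Function.iterate_succ_apply', Function.iterate_succ_apply', H.F_D, ih]

theorem Setup.main (H : Setup n r m Q B x y z F) (D : Derivation ℂ B B) (hD : D ≠ 0)
    (hln : ∀ b, ∃ k : ℕ, (⇑D)^[k] b = 0) (b : B) (hb : D (D b) = 0) :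
    b ∈ Algebra.adjoin ℂ (Set.range x ∪ {y}) := by
  classical
  -- some `om k` is nonzero
  have hom : ∃ k, om x y F D k ≠ 0 := by
    by_contra hcon
    push Not at hcon
    apply hD
    ext p
    refine H.inj _ ?_
    have hw : ww x y F D = 0 := by
      ext1 s
      rw [ww_apply]
      exact Finset.sum_eq_zero fun k _ => by rw [hcon k, smul_zero]
    rw [H.F_D, hw, Del]
    simp [Finsupp.linearCombination_apply]
  -- the maximal degree
  obtain ⟨e, he1, k0, he2⟩ : ∃ e, (∀ k, Bd (om x y F D k) e) ∧
      ∃ k, (om x y F D k).coeff e ≠ 0 := by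
    let U : Finset (V n) := Finset.univ.biUnion fun k => (om x y F D k).coeff.support
    have hU : ∀ u, u ∈ U ↔ ∃ k, (om x y F D k).coeff u ≠ 0 := by
      intro u; simp [U]
    obtain ⟨k, hk⟩ := hom
    obtain ⟨s, -, hs⟩ := exists_lead _ hk
    have hne : U.Nonempty := ⟨s, (hU s).2 ⟨k, hs⟩⟩
    refine ⟨U.max' hne, fun k u hu => ?_, (hU _).1 (U.max'_mem hne)⟩
    by_contra hc
    exact absurd (U.le_max' u ((hU u).2 ⟨k, hc⟩)) (not_le.2 hu)
  have hcoef : ∀ s u, (ww x y F D s).coeff u = ∑ k, (s k) • (om x y F D k).coeff u := by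
    intro s u
    rw [ww_apply, AddMonoidAlgebra.coeff_sum, Finsupp.finsetSum_apply]
    rfl
  have hw : ∀ s, Bd (ww x y F D s) e := by
    intro s u hu
    rw [hcoef]
    exact Finset.sum_eq_zero fun k _ => by rw [he1 k u hu, smul_zero]
  let l : V n →+ ℂ := AddMonoidHom.mk' (fun s => (ww x y F D s).coeff e) (by
    intro s t
    rw [map_add, AddMonoidAlgebra.coeff_add, Finsupp.add_apply])
  have hl : ∀ s, l s = (ww x y F D s).coeff e := fun s => rfl
  have hl0 : l ≠ 0 := by
    intro h
    apply he2
    rw [← ww_bv, ← hl, h]; rfl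
  obtain ⟨hle, hls⟩ := comb r H.hr m H.hm e l hl0
    (by
      intro s hs
      obtain ⟨v, rfl⟩ := SS_idx H.hr m s hs
      obtain ⟨k, hk⟩ := hln (nm x y z v)
      have h1 := (iter_Del hw (H.Ld_nm v).1 k).2
      rw [← H.F_iter, hk, (H.Ld_nm v).2, one_mul, map_zero] at h1
      have h2 := Finset.prod_eq_zero_iff.1 h1.symm
      obtain ⟨i, -, hi⟩ := h2
      refine ⟨i, ?_⟩
      rw [← hl, map_add, map_nsmul, nsmul_eq_mul] at hi
      exact hi)
    (by
      intro s hs hne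
      obtain ⟨v, rfl⟩ := SS_idx H.hr m s hs
      have h1 := (H.Ld_nm v).1.Del hw
      have h2 := (H.Ld_nm v).1.coeff_Del hw
      rw [(H.Ld_nm v).2, one_mul, ← hl] at h2
      rw [← H.F_D] at h1 h2
      have h3 : D (nm x y z v) ≠ 0 := by
        intro h
        rw [h, map_zero] at h2
        exact hne h2.symm
      obtain ⟨c, v', -, -, h4, h5⟩ := H.lead _ h3
      have := Bd.unique h1 (by rw [h2]; exact hne) h4 h5
      rw [this]; exact idx_SS m v')
  by_cases hb0 : b = 0
  · rw [hb0]; exact Subalgebra.zero_mem _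
  obtain ⟨c, v, hc, hmax, hv1, hv2⟩ := H.lead b hb0
  have h1 := (iter_Del hw hv1 2).2
  rw [← H.F_iter, Function.iterate_succ_apply', Function.iterate_one, hb, map_zero,
    Finset.prod_range_succ, Finset.prod_range_one] at h1
  have h2 : l (idx m v) * l (idx m v + e) = 0 := by
    have h1' := (mul_eq_zero.1 h1.symm).resolve_left hv2
    rw [zero_nsmul, add_zero, one_nsmul] at h1'
    exact h1'
  have hv0 : (idx m v) 0 ≤ 1 := by
    have he0 := hls e
    have he0' : (e 0 : ℂ) = -1 := by
      have : ((e 0 : ℂ) + 1) * l e = 0 := by linear_combination he0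
      have := (mul_eq_zero.1 this).resolve_right hle
      linear_combination this
    have he00 : e 0 = -1 := by exact_mod_cast he0'
    have hz : ∀ s, l s = 0 → s 0 = 0 := by
      intro s hs
      rw [hls] at hs
      have := (mul_eq_zero.1 hs).resolve_right hle
      have : (s 0 : ℂ) = 0 := by linear_combination -this
      exact_mod_cast this
    rcases mul_eq_zero.1 h2 with h | h
    · have := hz _ h; omega
    · have := hz _ h
      rw [V_add] at this; omega
  rw [← hc]
  refine Subalgebra.sum_mem _ fun i hi => Subalgebra.smul_mem _ ?_ _
  have hi0 := V_le_zero (hmax i hi)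
  rw [idx_zero m i] at hi0
  have hγ : i.2.2 = 0 := by
    by_contra hne
    have h3 : 1 ≤ i.2.2 := Nat.one_le_iff_ne_zero.2 hne
    have h4 : 2 * 1 ≤ r * i.2.2 := Nat.mul_le_mul H.hr h3
    have h5 : (2 : ℤ) ≤ r * i.2.2 := by exact_mod_cast h4
    omega
  rw [nm, hγ, pow_zero, mul_one]
  refine Subalgebra.mul_mem _ (Subalgebra.prod_mem _ fun j _ => Subalgebra.pow_mem _ ?_ _)
    (Subalgebra.pow_mem _ ?_ _)
  · exact Algebra.subset_adjoin (Or.inl ⟨j, rfl⟩)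
  · exact Algebra.subset_adjoin (Or.inr rfl)

end Ring
end Danielewski

/-- On `B = ℂ[x₁,…,xₙ,y,z]/(x^{[m]}z − Q(x,y))` with `Q` monic in
`y` of degree `r ≥ 2` and all `mᵢ ≥ 2`, for every nonzero locally nilpotent
`ℂ`-derivation `D`, `Ker(D²)` is contained in the image of `ℂ[x₁,…,xₙ,y]`. -/
theorem stmt15 (n r : ℕ) (hr : 2 ≤ r) (m : Fin n → ℕ) (hm : ∀ i, 2 ≤ m i)
    (Q : Polynomial (MvPolynomial (Fin n) ℂ)) (hQ : Q.Monic) (hdeg : Q.natDegree = r)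
    (ι : MvPolynomial (Fin n) ℂ →+* MvPolynomial (Fin n ⊕ Fin 2) ℂ)
    (hι : ι = (MvPolynomial.rename (Sum.inl : Fin n → Fin n ⊕ Fin 2)).toRingHom)
    (j : MvPolynomial (Fin n ⊕ Fin 1) ℂ →+* MvPolynomial (Fin n ⊕ Fin 2) ℂ)
    (hj : j = (MvPolynomial.rename
      (Sum.elim Sum.inl (fun _ : Fin 1 => Sum.inr 0) :
        Fin n ⊕ Fin 1 → Fin n ⊕ Fin 2)).toRingHom)
    (y z xm : MvPolynomial (Fin n ⊕ Fin 2) ℂ)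
    (hy : y = MvPolynomial.X (Sum.inr 0)) (hz : z = MvPolynomial.X (Sum.inr 1))
    (hxm : xm = ∏ i, MvPolynomial.X (Sum.inl i) ^ m i)
    (I : Ideal (MvPolynomial (Fin n ⊕ Fin 2) ℂ))
    (hI : I = Ideal.span {xm * z - Polynomial.eval₂ ι y Q})
    (D : Derivation ℂ
      (MvPolynomial (Fin n ⊕ Fin 2) ℂ ⧸ I) (MvPolynomial (Fin n ⊕ Fin 2) ℂ ⧸ I))
    (hD : D ≠ 0) (hln : ∀ b, ∃ k : ℕ, (⇑D)^[k] b = 0) :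
    ∀ b, D (D b) = 0 → b ∈ RingHom.range ((Ideal.Quotient.mk I).comp j) := by
  classical
  subst hxm hy hz hι hj
  obtain ⟨g, hg⟩ : ∃ g : MvPolynomial (Fin n ⊕ Fin 2) ℂ,
      g = (∏ i, MvPolynomial.X (Sum.inl i) ^ m i) * MvPolynomial.X (Sum.inr 1) -
    Polynomial.eval₂ (MvPolynomial.rename (Sum.inl : Fin n → Fin n ⊕ Fin 2)).toRingHom
      (MvPolynomial.X (Sum.inr 0)) Q := ⟨_, rfl⟩
  rw [← hg] at hI
  let val : Fin n ⊕ Fin 2 → AddMonoidAlgebra ℂ (Danielewski.V n) :=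
    Sum.elim Danielewski.xT ![Danielewski.yT, Danielewski.mT m * Danielewski.qT Q]
  let φ : MvPolynomial (Fin n ⊕ Fin 2) ℂ →ₐ[ℂ] AddMonoidAlgebra ℂ (Danielewski.V n) := MvPolynomial.aeval val
  have hφx : ∀ i, φ (MvPolynomial.X (Sum.inl i)) = Danielewski.xT i := fun i => by
    simp [φ, val]
  have hφy : φ (MvPolynomial.X (Sum.inr 0)) = Danielewski.yT := by simp [φ, val]
  have hφz : φ (MvPolynomial.X (Sum.inr 1)) = Danielewski.mT m * Danielewski.qT Q := by
    simp [φ, val]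
  have hφg : φ g = 0 := by
    have h1 : φ (Polynomial.eval₂ (MvPolynomial.rename (Sum.inl : Fin n → Fin n ⊕ Fin 2)).toRingHom
      (MvPolynomial.X (Sum.inr 0)) Q) = Danielewski.qT Q := by
      have h2 := Polynomial.hom_eval₂ Q
        (MvPolynomial.rename (R := ℂ) (Sum.inl : Fin n → Fin n ⊕ Fin 2)).toRingHom φ.toRingHom
        (MvPolynomial.X (Sum.inr 0))
      refine h2.trans ?_
      have h3 : φ.toRingHom (MvPolynomial.X (Sum.inr 0)) = Danielewski.yT := hφy
      rw [Danielewski.qT, h3]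
      congr 1
      have h4 : φ.comp (MvPolynomial.rename (R := ℂ) (Sum.inl : Fin n → Fin n ⊕ Fin 2))
          = MvPolynomial.aeval (R := ℂ) (Danielewski.xT (n := n)) := by
        ext1 i
        simp [φ, val]
      rw [← h4]; rfl
    rw [hg, map_sub, map_mul, h1, hφz, map_prod]
    simp only [map_pow, hφx]
    rw [← mul_assoc, Danielewski.xprod_mul_mT, one_mul, sub_self]
  let F : (MvPolynomial (Fin n ⊕ Fin 2) ℂ ⧸ I) →ₐ[ℂ] AddMonoidAlgebra ℂ (Danielewski.V n) :=
    Ideal.Quotient.liftₐ I φ (by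
      intro a ha
      rw [hI] at ha
      obtain ⟨c, rfl⟩ := Ideal.mem_span_singleton'.1 ha
      rw [map_mul, hφg, mul_zero])
  have hF : ∀ p, F (Ideal.Quotient.mk I p) = φ p := fun p => rfl
  let π : MvPolynomial (Fin n ⊕ Fin 2) ℂ →ₐ[ℂ] (MvPolynomial (Fin n ⊕ Fin 2) ℂ ⧸ I) := Ideal.Quotient.mkₐ ℂ I
  have hπ : ∀ p, π p = Ideal.Quotient.mk I p := fun p => rfl
  have H : Danielewski.Setup n r m Q (MvPolynomial (Fin n ⊕ Fin 2) ℂ ⧸ I)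
      (fun i => π (MvPolynomial.X (Sum.inl i)))
      (π (MvPolynomial.X (Sum.inr 0))) (π (MvPolynomial.X (Sum.inr 1))) F := by
    refine ⟨hr, hm, hQ, hdeg, hφx, hφy, hφz, ?_, ?_⟩
    · have h0 : π g = 0 := by
        rw [hπ, Ideal.Quotient.eq_zero_iff_mem]
        rw [hI]; exact Ideal.mem_span_singleton_self g
      rw [hg, map_sub, sub_eq_zero, map_mul, map_prod] at h0
      simp only [map_pow] at h0
      rw [h0]
      refine (Polynomial.hom_eval₂ Q
        (MvPolynomial.rename (R := ℂ) (Sum.inl : Fin n → Fin n ⊕ Fin 2)).toRingHom π.toRingHom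
        (MvPolynomial.X (Sum.inr 0))).trans ?_
      have h4 : π.comp (MvPolynomial.rename (R := ℂ) (Sum.inl : Fin n → Fin n ⊕ Fin 2))
          = MvPolynomial.aeval (R := ℂ) (fun i : Fin n => π (MvPolynomial.X (Sum.inl i))) := by
        ext1 i
        simp
      rw [← h4]; rfl
    · rw [eq_top_iff]
      intro b _
      obtain ⟨p, rfl⟩ := Ideal.Quotient.mk_surjective b
      rw [← hπ]
      induction p using MvPolynomial.induction_on with
      | C a =>
        have : π (MvPolynomial.C a) = algebraMap ℂ _ a := π.commutes a
        rw [this]; exact Subalgebra.algebraMap_mem _ a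
      | add p q hp hq => rw [map_add]; exact Subalgebra.add_mem _ (hp trivial) (hq trivial)
      | mul_X p i hp =>
        rw [map_mul]
        refine Subalgebra.mul_mem _ (hp trivial) (Algebra.subset_adjoin ?_)
        rcases i with i | i
        · exact Or.inl ⟨i, rfl⟩
        · fin_cases i
          · exact Or.inr (Or.inl rfl)
          · exact Or.inr (Or.inr rfl)
  intro b hb
  have hmain := H.main D hD hln b hb
  let J : MvPolynomial (Fin n ⊕ Fin 1) ℂ →ₐ[ℂ] (MvPolynomial (Fin n ⊕ Fin 2) ℂ ⧸ I) :=
    π.comp (MvPolynomial.rename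
      (Sum.elim Sum.inl (fun _ : Fin 1 => Sum.inr 0) : Fin n ⊕ Fin 1 → Fin n ⊕ Fin 2))
  have hle : Algebra.adjoin ℂ (Set.range (fun i => π (MvPolynomial.X (Sum.inl i))) ∪
      {π (MvPolynomial.X (Sum.inr 0))}) ≤ J.range := by
    refine Algebra.adjoin_le ?_
    rintro p (⟨i, rfl⟩ | h)
    · exact ⟨MvPolynomial.X (Sum.inl i), by simp [J]⟩
    · rw [Set.mem_singleton_iff.1 h]
      exact ⟨MvPolynomial.X (Sum.inr 0), by simp [J]⟩
  obtain ⟨p, hp⟩ := hle hmain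
  exact ⟨p, hp⟩
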